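/- arXiv:2103.07020 — 2 statements merged into one kernel-verified Lean document; each statement's English description precedes it below -/
import Mathlib

section
/- Let 0 ≤ θ ≤ π. Then the minimum over φ ∈ [0, π] of ∫_{φ − θ/2}^{φ + θ/2} |cos t| dt equals 4 sin²(θ/4), and this minimum is attained at φ = π/2. -/
open Real

lemma aux_pos (l r : ℝ) (h : l ≤ r) (hl : -(π / 2) ≤ l) (hr : r ≤ π / 2) :
    ∫ t in l..r, |Real.cos t| = Real.sin r - Real.sin l := by
  rw [← integral_cos]
  apply intervalIntegral.integral_congr
  intro t ht
  rw [Set.uIcc_of_le h] at ht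
  exact abs_of_nonneg (Real.cos_nonneg_of_mem_Icc ⟨by linarith [ht.1], by linarith [ht.2]⟩)

lemma aux_neg (l r : ℝ) (h : l ≤ r) (hl : π / 2 ≤ l) (hr : r ≤ π + π / 2) :
    ∫ t in l..r, |Real.cos t| = Real.sin l - Real.sin r := by
  have e : ∫ t in l..r, |Real.cos t| = ∫ t in l..r, -Real.cos t := by
    apply intervalIntegral.integral_congr
    intro t ht
    rw [Set.uIcc_of_le h] at ht
    exact abs_of_nonpos (Real.cos_nonpos_of_pi_div_two_le_of_le (by linarith [ht.1])
      (by linarith [ht.2]))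
  rw [e, intervalIntegral.integral_neg, integral_cos]
  ring

lemma aux_mid (l r : ℝ) (hl : -(π / 2) ≤ l) (hl' : l ≤ π / 2) (hr' : π / 2 ≤ r)
    (hr : r ≤ π + π / 2) :
    ∫ t in l..r, |Real.cos t| = 2 - Real.sin l - Real.sin r := by
  have hi : ∀ a b : ℝ, IntervalIntegrable (fun t => |Real.cos t|) MeasureTheory.volume a b :=
    fun a b => (Real.continuous_cos.abs).intervalIntegrable a b
  rw [← intervalIntegral.integral_add_adjacent_intervals (hi l (π / 2)) (hi (π / 2) r),
    aux_pos l _ hl' hl le_rfl, aux_neg _ r hr' le_rfl hr, Real.sin_pi_div_two]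
  ring

/-- for `0 ≤ θ ≤ π`, the minimum over `φ ∈ [0, π]` of
`∫_{φ−θ/2}^{φ+θ/2} |cos t| dt` equals `4 sin²(θ/4)`, and it is attained at `φ = π/2`. -/
theorem stmt14 (θ : ℝ) (h0 : 0 ≤ θ) (hπ : θ ≤ π) :
    IsLeast ((fun φ : ℝ => ∫ t in (φ - θ / 2)..(φ + θ / 2), |Real.cos t|) '' Set.Icc 0 π)
      (4 * Real.sin (θ / 4) ^ 2) ∧
    (∫ t in (π / 2 - θ / 2)..(π / 2 + θ / 2), |Real.cos t|) = 4 * Real.sin (θ / 4) ^ 2 := by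
  have hpi := Real.pi_pos
  have hs : 4 * Real.sin (θ / 4) ^ 2 = 2 - 2 * Real.cos (θ / 2) := by
    rw [show θ / 2 = 2 * (θ / 4) by ring, Real.cos_two_mul, Real.cos_sq']
    ring
  have hval : (∫ t in (π / 2 - θ / 2)..(π / 2 + θ / 2), |Real.cos t|)
      = 4 * Real.sin (θ / 4) ^ 2 := by
    rw [aux_mid _ _ (by linarith) (by linarith) (by linarith) (by linarith), hs,
      Real.sin_sub, Real.sin_add, Real.sin_pi_div_two, Real.cos_pi_div_two]
    ring
  refine ⟨⟨⟨π / 2, ⟨by linarith, by linarith⟩, hval⟩, ?_⟩, hval⟩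
  rintro _ ⟨φ, ⟨hφ0, hφπ⟩, rfl⟩
  simp only
  rw [hs]
  have hc0 : 0 ≤ Real.cos (θ / 2) := Real.cos_nonneg_of_mem_Icc ⟨by linarith, by linarith⟩
  have hc1 := Real.cos_le_one (θ / 2)
  have hs0 : 0 ≤ Real.sin (θ / 2) := Real.sin_nonneg_of_nonneg_of_le_pi (by linarith) (by linarith)
  have hsq := Real.sin_sq_add_cos_sq (θ / 2)
  rcases le_total (φ + θ / 2) (π / 2) with h | h
  · rw [aux_pos _ _ (by linarith) (by linarith) h, Real.sin_sub, Real.sin_add]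
    have hk : Real.sin (θ / 2) ≤ Real.cos φ := by
      rw [← Real.cos_pi_div_two_sub]
      exact Real.cos_le_cos_of_nonneg_of_le_pi hφ0 (by linarith) (by linarith)
    nlinarith [mul_le_mul_of_nonneg_right hk hs0, mul_nonneg hc0 (sub_nonneg.2 hc1)]
  rcases le_total (π / 2) (φ - θ / 2) with h' | h'
  · rw [aux_neg _ _ (by linarith) h' (by linarith), Real.sin_sub, Real.sin_add]
    have hk : Real.sin (θ / 2) ≤ -Real.cos φ := by
      rw [← Real.cos_pi_div_two_sub, ← Real.cos_pi_sub]
      exact Real.cos_le_cos_of_nonneg_of_le_pi (by linarith) (by linarith) (by linarith)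
    nlinarith [mul_le_mul_of_nonneg_right hk hs0, mul_nonneg hc0 (sub_nonneg.2 hc1)]
  · rw [aux_mid _ _ (by linarith) h' h (by linarith), Real.sin_sub, Real.sin_add]
    nlinarith [mul_nonneg hc0 (sub_nonneg.2 (Real.sin_le_one φ))]
end

section
/- Let 0 ≤ θ ≤ π. Then the maximum over φ ∈ [0, π] of ∫_{φ − θ/2}^{φ + θ/2} |cos t| dt equals 2 sin(θ/2), and this maximum is attained at φ = 0 (and at φ = π). -/
open Real

lemma aux_pos_s15 (a b : ℝ) (ha : -(π / 2) ≤ a) (hab : a ≤ b) (hb : b ≤ π / 2) :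
    (∫ t in a..b, |Real.cos t|) = Real.sin b - Real.sin a := by
  rw [← integral_cos]
  apply intervalIntegral.integral_congr
  intro t ht
  rw [Set.uIcc_of_le hab] at ht
  exact abs_of_nonneg (Real.cos_nonneg_of_mem_Icc ⟨ha.trans ht.1, ht.2.trans hb⟩)

lemma aux_neg_s15 (a b : ℝ) (ha : π / 2 ≤ a) (hab : a ≤ b) (hb : b ≤ π + π / 2) :
    (∫ t in a..b, |Real.cos t|) = Real.sin a - Real.sin b := by
  have h : (∫ t in a..b, |Real.cos t|) = ∫ t in a..b, -Real.cos t := by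
    apply intervalIntegral.integral_congr
    intro t ht
    rw [Set.uIcc_of_le hab] at ht
    exact abs_of_nonpos
      (Real.cos_nonpos_of_pi_div_two_le_of_le (ha.trans ht.1) (ht.2.trans hb))
  rw [h, intervalIntegral.integral_neg, integral_cos]
  ring

/-- for `0 ≤ θ ≤ π`, the maximum over `φ ∈ [0, π]` of
`∫_{φ−θ/2}^{φ+θ/2} |cos t| dt` equals `2 sin(θ/2)`, and it is attained at `φ = 0` and `φ = π`. -/
theorem stmt15 (θ : ℝ) (h0 : 0 ≤ θ) (hπ : θ ≤ π) :
    IsGreatest ((fun φ : ℝ => ∫ t in (φ - θ / 2)..(φ + θ / 2), |Real.cos t|) '' Set.Icc 0 π)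
      (2 * Real.sin (θ / 2)) ∧
    (∫ t in (0 - θ / 2)..(0 + θ / 2), |Real.cos t|) = 2 * Real.sin (θ / 2) ∧
    (∫ t in (π - θ / 2)..(π + θ / 2), |Real.cos t|) = 2 * Real.sin (θ / 2) := by
  have hp := Real.pi_pos
  have e0 : (∫ t in (0 - θ / 2)..(0 + θ / 2), |Real.cos t|) = 2 * Real.sin (θ / 2) := by
    rw [aux_pos_s15 _ _ (by linarith) (by linarith) (by linarith), Real.sin_add, Real.sin_sub]
    simp; ring
  have e1 : (∫ t in (π - θ / 2)..(π + θ / 2), |Real.cos t|) = 2 * Real.sin (θ / 2) := by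
    rw [aux_neg_s15 _ _ (by linarith) (by linarith) (by linarith), Real.sin_add, Real.sin_sub]
    simp; ring
  refine ⟨⟨⟨0, ⟨le_refl _, hp.le⟩, e0⟩, ?_⟩, e0, e1⟩
  rintro _ ⟨φ, ⟨hφ0, hφ1⟩, rfl⟩
  have hs : 0 ≤ Real.sin (θ / 2) := Real.sin_nonneg_of_nonneg_of_le_pi (by linarith) (by linarith)
  have hs1 := Real.sin_le_one (θ / 2)
  have hc : 0 ≤ Real.cos (θ / 2) := Real.cos_nonneg_of_mem_Icc ⟨by linarith, by linarith⟩
  show (∫ t in (φ - θ / 2)..(φ + θ / 2), |Real.cos t|) ≤ _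
  rcases le_total (φ + θ / 2) (π / 2) with hA | hA
  · rw [aux_pos_s15 _ _ (by linarith) (by linarith) hA, Real.sin_add, Real.sin_sub]
    nlinarith [Real.cos_le_one φ]
  rcases le_total (π / 2) (φ - θ / 2) with hB | hB
  · rw [aux_neg_s15 _ _ hB (by linarith) (by linarith), Real.sin_add, Real.sin_sub]
    nlinarith [Real.neg_one_le_cos φ]
  have hi : ∀ a b : ℝ, IntervalIntegrable (fun t => |Real.cos t|) MeasureTheory.volume a b :=
    fun a b => (Real.continuous_cos.abs).intervalIntegrable a b
  rw [← intervalIntegral.integral_add_adjacent_intervals (hi _ (π / 2)) (hi (π / 2) _),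
    aux_pos_s15 _ _ (by linarith) hB le_rfl, aux_neg_s15 _ _ le_rfl hA (by linarith),
    Real.sin_add, Real.sin_sub, Real.sin_pi_div_two]
  have hk : Real.cos (θ / 2) ≤ Real.sin φ := by
    rw [← Real.cos_sub_pi_div_two φ, ← Real.cos_abs (φ - π / 2)]
    exact Real.cos_le_cos_of_nonneg_of_le_pi (abs_nonneg _) (by linarith)
      (abs_le.2 ⟨by linarith, by linarith⟩)
  nlinarith [Real.sin_sq_add_cos_sq (θ / 2), mul_le_mul_of_nonneg_right hk hc]
end
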